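/- Let L > 0 and let u : ℝ → ℝ be continuously differentiable with u(0) = 0. Then ∫₀ᴸ u(x)⁴ dx ≤ 2·( ∫₀ᴸ u(x)² dx )^{3/2} · ( ∫₀ᴸ (u'(x))² dx )^{1/2}. -/

import Mathlib

/-- The Cauchy–Schwarz inequality for interval integrals of continuous functions. -/
theorem intervalIntegral_mul_le_sqrt_mul_sqrt {f g : ℝ → ℝ} {a b : ℝ} (hab : a ≤ b)
    (hf : Continuous f) (hg : Continuous g) :
    ∫ x in a..b, f x * g x ≤ √(∫ x in a..b, f x ^ 2) * √(∫ x in a..b, g x ^ 2) := by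
  have hquad : ∀ t : ℝ, 0 ≤ (∫ x in a..b, g x ^ 2) * (t * t)
      + (2 * ∫ x in a..b, f x * g x) * t + ∫ x in a..b, f x ^ 2 := by
    intro t
    have hexpand : ∫ x in a..b, (f x + t * g x) ^ 2 = (∫ x in a..b, g x ^ 2) * (t * t)
        + (2 * ∫ x in a..b, f x * g x) * t + ∫ x in a..b, f x ^ 2 := by
      have hpoint : ∀ x, (f x + t * g x) ^ 2
          = t * t * g x ^ 2 + 2 * t * (f x * g x) + f x ^ 2 := fun x => by ring
      simp only [hpoint]
      rw [intervalIntegral.integral_add, intervalIntegral.integral_add,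
        intervalIntegral.integral_const_mul, intervalIntegral.integral_const_mul]
      · ring
      all_goals exact Continuous.intervalIntegrable (by fun_prop) _ _
    rw [← hexpand]
    exact intervalIntegral.integral_nonneg hab fun x _ => sq_nonneg _
  have hdiscrim := discrim_le_zero hquad
  rw [discrim] at hdiscrim
  rw [← Real.sqrt_mul (intervalIntegral.integral_nonneg hab fun x _ => sq_nonneg _)]
  apply Real.le_sqrt_of_sq_le
  linarith

/-- Agmon's inequality on an interval, for a function vanishing at the left endpoint. -/
theorem sq_le_two_mul_sqrt_mul_sqrt_of_eq_zero {u : ℝ → ℝ} (hu : ContDiff ℝ 1 u) {a b x : ℝ}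
    (ha : u a = 0) (hx : x ∈ Set.Icc a b) :
    u x ^ 2 ≤ 2 * (√(∫ y in a..b, u y ^ 2) * √(∫ y in a..b, deriv u y ^ 2)) := by
  have hcu : Continuous u := hu.continuous
  have hcd : Continuous (deriv u) := hu.continuous_deriv le_rfl
  have hftc : ∫ y in a..x, 2 * (u y * deriv u y) = u x ^ 2 := by
    rw [intervalIntegral.integral_eq_sub_of_hasDerivAt (f := fun y => u y ^ 2)]
    · simp [ha]
    · intro y _
      exact (((hu.differentiable one_ne_zero) y).hasDerivAt.fun_pow 2).congr_deriv
        (by push_cast; ring)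
    · exact Continuous.intervalIntegrable (by fun_prop) _ _
  calc u x ^ 2 = 2 * ∫ y in a..x, u y * deriv u y := by
        rw [← hftc, intervalIntegral.integral_const_mul]
    _ ≤ 2 * ∫ y in a..x, |u y| * |deriv u y| := by
        gcongr
        refine intervalIntegral.integral_mono_on hx.1
          (Continuous.intervalIntegrable (by fun_prop) _ _)
          (Continuous.intervalIntegrable (by fun_prop) _ _) fun y _ => ?_
        rw [← abs_mul]
        exact le_abs_self _
    _ ≤ 2 * ∫ y in a..b, |u y| * |deriv u y| := by
        gcongr
        exact intervalIntegral.integral_mono_interval le_rfl hx.1 hx.2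
          (Filter.Eventually.of_forall fun y => by positivity)
          (Continuous.intervalIntegrable (by fun_prop) _ _)
    _ ≤ 2 * (√(∫ y in a..b, u y ^ 2) * √(∫ y in a..b, deriv u y ^ 2)) := by
        gcongr
        simpa only [sq_abs] using
          intervalIntegral_mul_le_sqrt_mul_sqrt (hx.1.trans hx.2) hcu.abs hcd.abs

theorem gagliardo_nirenberg_L4 (L : ℝ) (hL : 0 < L) (u : ℝ → ℝ)
    (hu : ContDiff ℝ 1 u) (h0 : u 0 = 0) :
    (∫ x in (0 : ℝ)..L, (u x) ^ 4)
      ≤ 2 * ((∫ x in (0 : ℝ)..L, (u x) ^ 2) ^ ((3 : ℝ) / 2))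
        * ((∫ x in (0 : ℝ)..L, (deriv u x) ^ 2) ^ ((1 : ℝ) / 2)) := by
  have hcu : Continuous u := hu.continuous
  have hA : 0 ≤ ∫ x in (0 : ℝ)..L, u x ^ 2 :=
    intervalIntegral.integral_nonneg hL.le fun x _ => sq_nonneg _
  have hbound : ∫ x in (0 : ℝ)..L, u x ^ 4
      ≤ ∫ x in (0 : ℝ)..L,
        2 * (√(∫ y in (0 : ℝ)..L, u y ^ 2) * √(∫ y in (0 : ℝ)..L, deriv u y ^ 2)) * u x ^ 2 := by
    refine intervalIntegral.integral_mono_on hL.le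
      (Continuous.intervalIntegrable (by fun_prop) _ _)
      (Continuous.intervalIntegrable (by fun_prop) _ _) fun x hx => ?_
    rw [show u x ^ 4 = u x ^ 2 * u x ^ 2 by ring]
    gcongr
    exact sq_le_two_mul_sqrt_mul_sqrt_of_eq_zero hu h0 hx
  rw [intervalIntegral.integral_const_mul] at hbound
  have hpow : (∫ x in (0 : ℝ)..L, u x ^ 2) ^ ((3 : ℝ) / 2)
      = (∫ x in (0 : ℝ)..L, u x ^ 2) * √(∫ x in (0 : ℝ)..L, u x ^ 2) := by
    rw [Real.sqrt_eq_rpow, show (3 : ℝ) / 2 = 1 + 1 / 2 by norm_num,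
      Real.rpow_add_of_nonneg hA zero_le_one (by norm_num), Real.rpow_one]
  rw [hpow, ← Real.sqrt_eq_rpow]
  linarith
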